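/- Suppose there exists an m×n matrix M* over Σ that is fair w.r.t. γ with d(M,M*) ≤ k and dr(M*) ≤ r. Then there exists an m×n matrix M' over Σ that is fair w.r.t. γ such that: (i) dr(M') ≤ r; (ii) every type of M' is a type of M; (iii) for every M-fair type τ, either no row i has M[i,⋆] = τ and M'[i,⋆] ≠ τ, or (no row i has M'[i,⋆] = τ and M[i,⋆] ≠ τ, and all rows i with M[i,⋆] = τ and M'[i,⋆] ≠ τ have the same type in M'); and (iv) c̃ · d(M,M') ≤ (5·c̃ − 3) · k. -/

import Mathlib

variable {m n c : ℕ} {A : Type*} [Fintype A] [DecidableEq A]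

/-- The set of distinct row types of a matrix. -/
def types (M : Fin m → Fin n → A) : Finset (Fin n → A) :=
  Finset.univ.image (fun i => M i)

/-- The number of distinct rows of a matrix. -/
def dr (M : Fin m → Fin n → A) : ℕ := (types M).card

/-- The cluster of a type `τ` in `M`: the set of rows whose type is `τ`. -/
def cluster (M : Fin m → Fin n → A) (τ : Fin n → A) : Finset (Fin m) :=
  Finset.univ.filter (fun i => M i = τ)

/-- The edit cost between two matrices: the number of positions where they differ. -/
def editCost (M M' : Fin m → Fin n → A) : ℕ :=
  ((Finset.univ : Finset (Fin m × Fin n)).filter (fun p => M p.1 p.2 ≠ M' p.1 p.2)).card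

/-- The number of occurrences of color `z` in the coloring `γ`. -/
def colorCount (γ : Fin m → Fin c) (z : Fin c) : ℕ :=
  (Finset.univ.filter (fun i => γ i = z)).card

/-- A set of rows is fair w.r.t. `γ` if it witnesses the same color distribution as `γ`. -/
def fairSet (γ : Fin m → Fin c) (S : Finset (Fin m)) : Prop :=
  ∀ z : Fin c, m * (S.filter (fun i => γ i = z)).card = colorCount γ z * S.card

/-- A matrix is fair if the cluster of each of its types is fair. -/
def fairMatrix (γ : Fin m → Fin c) (M' : Fin m → Fin n → A) : Prop :=
  ∀ τ ∈ types M', fairSet γ (cluster M' τ)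

/-- The fairlet size `c̃ = m / gcd(|γ|_1, …, |γ|_c)`. -/
def fairletSize (γ : Fin m → Fin c) : ℕ :=
  m / Finset.univ.gcd (colorCount γ)

/-- If all fibers of `q` and `p` have the same size `C`, some perfect matching between the fibers of
`q` and those of `p` uses only intersecting pairs and weighs at most the average. -/
theorem exists_perm_sum_le_of_fiber_card {R ι : Type*} [Fintype R] [Fintype ι] [DecidableEq ι]
    (q p : R → ι) {C : ℕ} (hC : 0 < C)
    (hq : ∀ x, (Finset.univ.filter fun j => q j = x).card = C)
    (hp : ∀ x, (Finset.univ.filter fun j => p j = x).card = C) (w : ι → ι → ℕ) :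
    ∃ π : Equiv.Perm ι, (∀ x, ∃ j, q j = x ∧ p j = π x) ∧
      C * ∑ x, w x (π x) ≤ ∑ j, w (q j) (p j) := by
  classical
  have hC' : (0 : ℚ) < C := by exact_mod_cast hC
  let B : Matrix ι ι ℚ := fun x y => ∑ j, if q j = x ∧ p j = y then (C : ℚ)⁻¹ else 0
  have hB : B ∈ doublyStochastic ℚ ι := by
    rw [mem_doublyStochastic_iff_sum]
    refine ⟨fun x y => Finset.sum_nonneg fun j _ => by split_ifs <;> positivity, fun x => ?_,
      fun y => ?_⟩
    · rw [Finset.sum_comm]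
      simp only [ite_and]
      simp only [Finset.sum_ite_irrel, Finset.sum_ite_eq, Finset.mem_univ, if_true,
        Finset.sum_const_zero]
      rw [← Finset.sum_filter, Finset.sum_const, hq, nsmul_eq_mul, mul_inv_cancel₀ hC'.ne']
    · rw [Finset.sum_comm]
      simp only [and_comm (a := q _ = _), ite_and]
      simp only [Finset.sum_ite_irrel, Finset.sum_ite_eq, Finset.mem_univ, if_true,
        Finset.sum_const_zero]
      rw [← Finset.sum_filter, Finset.sum_const, hp, nsmul_eq_mul, mul_inv_cancel₀ hC'.ne']
  obtain ⟨v, hv0, hv1, hvB⟩ := exists_eq_sum_perm_of_mem_doublyStochastic hB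
  have hBv : ∀ x y, B x y = ∑ σ : Equiv.Perm ι, if σ x = y then v σ else 0 := by
    intro x y
    rw [← hvB, Matrix.sum_apply]
    refine Finset.sum_congr rfl fun σ _ => ?_
    simp [Equiv.Perm.permMatrix, PEquiv.toMatrix_apply, Equiv.toPEquiv_apply, eq_comm]
  have hsum : ∑ σ : Equiv.Perm ι, v σ * ∑ x, (w x (σ x) : ℚ)
      = (C : ℚ)⁻¹ * ∑ j, (w (q j) (p j) : ℚ) := by
    have h1 : ∑ x, ∑ y, B x y * w x y = ∑ σ : Equiv.Perm ι, v σ * ∑ x, (w x (σ x) : ℚ) := by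
      simp only [hBv, Finset.sum_mul, ite_mul, zero_mul, Finset.mul_sum]
      rw [Finset.sum_congr rfl fun x _ => Finset.sum_comm, Finset.sum_comm]
      simp
    have h2 : ∑ x, ∑ y, B x y * w x y = (C : ℚ)⁻¹ * ∑ j, (w (q j) (p j) : ℚ) := by
      simp only [B, Finset.sum_mul, ite_mul, zero_mul, Finset.mul_sum]
      rw [Finset.sum_congr rfl fun x _ => Finset.sum_comm, Finset.sum_comm]
      simp [ite_and]
    rw [← h1, h2]
  obtain ⟨σ, hσ, hle⟩ : ∃ σ : Equiv.Perm ι, 0 < v σ ∧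
      ∑ x, (w x (σ x) : ℚ) ≤ (C : ℚ)⁻¹ * ∑ j, (w (q j) (p j) : ℚ) := by
    by_contra! hcon
    set L : ℚ := (C : ℚ)⁻¹ * ∑ j, (w (q j) (p j) : ℚ)
    have hL : L = ∑ σ, v σ * L := by rw [← Finset.sum_mul, hv1, one_mul]
    have hlt : ∑ σ, v σ * L < ∑ σ : Equiv.Perm ι, v σ * ∑ x, (w x (σ x) : ℚ) := by
      obtain ⟨σ, -, hσ⟩ : ∃ σ ∈ (Finset.univ : Finset (Equiv.Perm ι)), v σ ≠ 0 :=
        Finset.exists_ne_zero_of_sum_ne_zero (by rw [hv1]; exact one_ne_zero)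
      have hpos : ∀ σ, v σ ≠ 0 → 0 < v σ := fun σ h => lt_of_le_of_ne (hv0 σ) h.symm
      refine Finset.sum_lt_sum (fun σ _ => ?_) ⟨σ, Finset.mem_univ _, ?_⟩
      · rcases eq_or_ne (v σ) 0 with h | h
        · simp [h]
        · exact mul_le_mul_of_nonneg_left (hcon σ (hpos σ h)).le (hv0 σ)
      · exact mul_lt_mul_of_pos_left (hcon σ (hpos σ hσ)) (hpos σ hσ)
    exact absurd (hsum.trans hL) hlt.ne'
  refine ⟨σ, fun x => ?_, ?_⟩
  · have hx : 0 < B x (σ x) := by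
      rw [hBv]
      refine lt_of_lt_of_le hσ ?_
      have := Finset.single_le_sum (f := fun ρ : Equiv.Perm ι => if ρ x = σ x then v ρ else 0)
        (fun ρ _ => by split_ifs <;> simp [hv0]) (Finset.mem_univ σ)
      simpa using this
    obtain ⟨j, -, hj⟩ := Finset.exists_ne_zero_of_sum_ne_zero hx.ne'
    exact ⟨j, by simpa using (ite_ne_right_iff.1 hj).1⟩
  · have : (C : ℚ) * ∑ x, (w x (σ x) : ℚ) ≤ ∑ j, (w (q j) (p j) : ℚ) := by
      rwa [inv_mul_eq_div, le_div_iff₀' hC'] at hle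
    exact_mod_cast this

/-- The values of a color-preserving permutation `G` on `D` extend to a color-preserving permutation
whose cost exceeds that of the identity by at most twice the cost of the rows of `D` moved by `G`. -/
theorem exists_perm_extending {R X : Type*} [Fintype R] [DecidableEq R] (col : R → X)
    {n : ℕ} {A : Type*} [DecidableEq A] (M N : R → Fin n → A) (G : Equiv.Perm R)
    (hG : ∀ i, col (G i) = col i) (D : Finset R) :
    ∃ H : Equiv.Perm R, (∀ i, col (H i) = col i) ∧ (∀ i ∈ D, H i = G i) ∧
      (∀ i, G i = i → H i = i) ∧
      ∑ i, hammingDist (M i) (N (H i)) ≤ ∑ i, hammingDist (M i) (N i) +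
        2 * ∑ i ∈ D, if G i = i then 0 else hammingDist (M i) (N (G i)) := by
  induction D using Finset.induction_on with
  | empty => exact ⟨1, by simp⟩
  | insert i D hi ih =>
    obtain ⟨H, hcol, hHD, hfix, hcost⟩ := ih
    rw [Finset.sum_insert hi]
    by_cases hHi : H i = G i
    · refine ⟨H, hcol, ?_, hfix, by omega⟩
      simpa [hHi] using hHD
    have hGi : G i ≠ i := fun h => hHi ((hfix i h).trans h.symm)
    obtain ⟨x, hx⟩ := H.surjective (G i)
    have hxi : x ≠ i := by rintro rfl; exact hHi hx
    have hxD : x ∉ D := fun h => hxi (G.injective ((hHD x h).symm.trans hx))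
    have hxG : G x ≠ x := fun h => hxi (G.injective (h.trans ((hfix x h).symm.trans hx)))
    have hne : ∀ j, j ≠ i → j ≠ x → (H * Equiv.swap i x) j = H j := fun j h1 h2 => by
      simp [Equiv.swap_apply_of_ne_of_ne h1 h2]
    have hi' : (H * Equiv.swap i x) i = G i := by simp [hx]
    have hx' : (H * Equiv.swap i x) x = H i := by simp
    refine ⟨H * Equiv.swap i x, fun j => ?_, fun j hj => ?_, fun j hj => ?_, ?_⟩
    · by_cases h1 : j = i
      · rw [h1, hi', hG]
      by_cases h2 : j = x
      · rw [h2, hx', hcol, ← hG i, ← hx, hcol]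
      rw [hne j h1 h2, hcol]
    · rcases Finset.mem_insert.1 hj with rfl | hj
      · exact hi'
      · rw [hne j (fun h => hi (h ▸ hj)) (fun h => hxD (h ▸ hj)), hHD j hj]
    · rw [hne j (fun h => hGi (h ▸ hj)) (fun h => hxG (h ▸ hj)), hfix j hj]
    · have key : ∀ f : R → ℕ, ∑ j, f j = f i + f x + ∑ j ∈ {i, x}ᶜ, f j := fun f => by
        rw [← Finset.sum_add_sum_compl {i, x} f, Finset.sum_pair hxi.symm]
      rw [key] at hcost
      rw [key (fun j => hammingDist (M j) (N ((H * Equiv.swap i x) j)))]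
      have hrest : ∑ j ∈ ({i, x} : Finset R)ᶜ, hammingDist (M j) (N ((H * Equiv.swap i x) j))
          = ∑ j ∈ ({i, x} : Finset R)ᶜ, hammingDist (M j) (N (H j)) := by
        refine Finset.sum_congr rfl fun j hj => ?_
        simp only [Finset.mem_compl, Finset.mem_insert, Finset.mem_singleton, not_or] at hj
        rw [hne j hj.1 hj.2]
      rw [hrest, hi', hx', if_neg hGi]
      rw [hx] at hcost
      have t1 := hammingDist_triangle (M x) (N (G i)) (N (H i))
      have t2 := hammingDist_triangle (N (G i)) (M i) (N (H i))
      rw [hammingDist_comm (N (G i)) (M i)] at t2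
      omega

theorem editCost_eq_sum_hammingDist {α : Type*} [DecidableEq α]
    (M M' : Fin m → Fin n → α) :
    editCost M M' = ∑ i, hammingDist (M i) (M' i) := by
  simp only [editCost, hammingDist, Finset.card_filter, Fintype.sum_prod_type]

/-- The signed contribution of row `i` to the imbalance of color `z`. -/
def colorExcess (γ : Fin m → Fin c) (z : Fin c) (i : Fin m) : ℤ :=
  (if γ i = z then (m : ℤ) else 0) - colorCount γ z

theorem fairSet_iff_sum_colorExcess (γ : Fin m → Fin c) (S : Finset (Fin m)) :
    fairSet γ S ↔ ∀ z, ∑ i ∈ S, colorExcess γ z i = 0 := by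
  refine forall_congr' fun z => ?_
  simp only [colorExcess, Finset.sum_sub_distrib, ← Finset.sum_filter, Finset.sum_const,
    nsmul_eq_mul, sub_eq_zero]
  rw [mul_comm m, mul_comm (colorCount γ z)]
  exact_mod_cast Iff.rfl

/-- If every fiber of `f` is fair, then so is every preimage under `f`. -/
theorem fairSet_filter_of_fibers {B : Type*} [DecidableEq B] (γ : Fin m → Fin c) (f : Fin m → B)
    (p : B → Prop) [DecidablePred p]
    (hf : ∀ b, p b → fairSet γ (Finset.univ.filter fun i => f i = b)) :
    fairSet γ (Finset.univ.filter fun i => p (f i)) := by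
  simp only [fairSet_iff_sum_colorExcess] at hf ⊢
  intro z
  rw [← Finset.sum_fiberwise_of_maps_to (t := (Finset.univ.filter fun i => p (f i)).image f)
    (g := f) (fun i hi => Finset.mem_image_of_mem f hi)]
  refine Finset.sum_eq_zero fun b hb => ?_
  obtain ⟨j, hj, rfl⟩ := Finset.mem_image.1 hb
  have hpj : p (f j) := (Finset.mem_filter.1 hj).2
  rw [← hf (f j) hpj z, Finset.filter_filter]
  refine Finset.sum_congr (Finset.filter_congr fun i _ => ?_) fun _ _ => rfl
  exact ⟨fun h => h.2, fun h => ⟨h ▸ hpj, h⟩⟩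

/-- The number of rows of color `z` in a fairlet. -/
def fairletCount (γ : Fin m → Fin c) (z : Fin c) : ℕ :=
  colorCount γ z / Finset.univ.gcd (colorCount γ)

theorem sum_colorCount (γ : Fin m → Fin c) : ∑ z, colorCount γ z = m := by
  have := Finset.card_eq_sum_card_fiberwise (f := γ) (s := Finset.univ) (t := Finset.univ)
    (fun _ _ => by simp)
  simpa [colorCount] using this.symm

theorem gcd_mul_fairletCount (γ : Fin m → Fin c) (z : Fin c) :
    Finset.univ.gcd (colorCount γ) * fairletCount γ z = colorCount γ z :=
  Nat.mul_div_cancel' (Finset.gcd_dvd (Finset.mem_univ z))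

theorem gcd_mul_fairletSize (γ : Fin m → Fin c) :
    Finset.univ.gcd (colorCount γ) * fairletSize γ = m := by
  refine Nat.mul_div_cancel' ?_
  conv_rhs => rw [← sum_colorCount γ]
  exact Finset.dvd_sum fun z hz => Finset.gcd_dvd hz

theorem gcd_colorCount_pos (hm : 0 < m) (γ : Fin m → Fin c) :
    0 < Finset.univ.gcd (colorCount γ) :=
  Nat.pos_of_ne_zero fun h => by have := gcd_mul_fairletSize γ; simp [h] at this; omega

theorem sum_fairletCount (hm : 0 < m) (γ : Fin m → Fin c) :
    ∑ z, fairletCount γ z = fairletSize γ := by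
  refine Nat.eq_of_mul_eq_mul_left (gcd_colorCount_pos hm γ) ?_
  rw [Finset.mul_sum, gcd_mul_fairletSize]
  simp only [gcd_mul_fairletCount, sum_colorCount]

theorem fairSet.exists_card_eq (hm : 0 < m) {γ : Fin m → Fin c} {S : Finset (Fin m)}
    (hS : fairSet γ S) :
    ∃ k, ∀ z, (S.filter fun i => γ i = z).card = k * fairletCount γ z := by
  have hg := gcd_colorCount_pos hm γ
  have hms := gcd_mul_fairletSize γ
  have hdvd : fairletSize γ ∣ S.card := by
    have h1 : m ∣ Finset.univ.gcd fun z => colorCount γ z * S.card :=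
      Finset.dvd_gcd fun z _ => ⟨_, (hS z).symm⟩
    rw [Finset.gcd_mul_right, normalize_eq] at h1
    conv_lhs at h1 => rw [← hms]
    exact Nat.dvd_of_mul_dvd_mul_left hg h1
  obtain ⟨k, hk⟩ := hdvd
  refine ⟨k, fun z => Nat.eq_of_mul_eq_mul_left hm ?_⟩
  rw [hS z, hk, ← gcd_mul_fairletCount γ z]
  calc Finset.univ.gcd (colorCount γ) * fairletCount γ z * (fairletSize γ * k)
      = Finset.univ.gcd (colorCount γ) * fairletSize γ * (k * fairletCount γ z) := by ring
    _ = m * (k * fairletCount γ z) := by rw [hms]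

/-- The positions of a fairlet, each carrying a color. -/
abbrev FairletSlot (γ : Fin m → Fin c) : Type := Σ z : Fin c, Fin (fairletCount γ z)

theorem card_fairletSlot (hm : 0 < m) (γ : Fin m → Fin c) :
    Fintype.card (FairletSlot γ) = fairletSize γ := by
  simp [sum_fairletCount hm]

theorem fairletSize_pos (hm : 0 < m) (γ : Fin m → Fin c) : 0 < fairletSize γ :=
  Nat.pos_of_ne_zero fun h => by have := gcd_mul_fairletSize γ; simp [h] at this; omega

/-- A labelling of the rows whose fibers are all fair refines to a partition into fairlets. -/
theorem exists_fairlet_partition (hm : 0 < m) (γ : Fin m → Fin c) {B : Type*} [Fintype B]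
    [DecidableEq B] (f : Fin m → B)
    (hf : ∀ b, fairSet γ (Finset.univ.filter fun i => f i = b)) :
    ∃ (e : Fin m ≃ Fin (Finset.univ.gcd (colorCount γ)) × FairletSlot γ)
      (lab : Fin (Finset.univ.gcd (colorCount γ)) → B),
      (∀ i, (e i).2.1 = γ i) ∧ ∀ i, lab (e i).1 = f i := by
  choose k hk using fun b => (hf b).exists_card_eq hm
  have hE : ∀ y : B × Fin c, Nonempty
      ({i // (f i, γ i) = y} ≃ Fin (k y.1) × Fin (fairletCount γ y.2)) := by
    rintro ⟨b, z⟩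
    refine Fintype.card_eq.1 ?_
    rw [Fintype.card_subtype, Fintype.card_prod, Fintype.card_fin, Fintype.card_fin, ← hk b z,
      Finset.filter_filter]
    simp only [Prod.mk.injEq]
  let E := fun y => (hE y).some
  let e₁ : Fin m ≃ (Σ b, Fin (k b)) × FairletSlot γ :=
    ((Equiv.sigmaFiberEquiv fun i => (f i, γ i)).symm.trans (Equiv.sigmaCongrRight E)).trans
      { toFun := fun x => (⟨x.1.1, x.2.1⟩, ⟨x.1.2, x.2.2⟩)
        invFun := fun x => ⟨(x.1.1, x.2.1), (x.1.2, x.2.2)⟩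
        left_inv := fun _ => rfl
        right_inv := fun _ => rfl }
  have hcard : Fintype.card (Σ b, Fin (k b)) = Finset.univ.gcd (colorCount γ) := by
    have h1 := Fintype.card_congr e₁
    rw [Fintype.card_fin, Fintype.card_prod, card_fairletSlot hm] at h1
    refine Nat.eq_of_mul_eq_mul_right (fairletSize_pos hm γ) ?_
    rw [← h1, gcd_mul_fairletSize]
  let e₂ := Fintype.equivFinOfCardEq hcard
  exact ⟨e₁.trans (e₂.prodCongr (Equiv.refl _)), fun x => (e₂.symm x).1, fun i => rfl,
    fun i => by simp [e₁, Equiv.sigmaFiberEquiv]⟩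

theorem card_fairlet {γ : Fin m → Fin c} {ι : Type*} [DecidableEq ι]
    (e : Fin m ≃ ι × FairletSlot γ) (x : ι) :
    (Finset.univ.filter fun i => (e i).1 = x).card = Fintype.card (FairletSlot γ) := by
  have h : (Finset.univ.filter fun i => (e i).1 = x)
      = Finset.univ.image fun s => e.symm (x, s) := by
    ext i
    simp only [Finset.mem_filter, Finset.mem_univ, true_and, Finset.mem_image]
    exact ⟨fun hi => ⟨(e i).2, by simp [← hi]⟩, by rintro ⟨s, rfl⟩; simp⟩
  rw [h, Finset.card_image_of_injective _ fun s t hst => by simpa using hst, Finset.card_univ]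

theorem fairSet_fairlet (hm : 0 < m) {γ : Fin m → Fin c} {ι : Type*} [DecidableEq ι]
    (e : Fin m ≃ ι × FairletSlot γ) (he : ∀ i, (e i).2.1 = γ i) (x : ι) :
    fairSet γ (Finset.univ.filter fun i => (e i).1 = x) := by
  intro z
  have h : ((Finset.univ.filter fun i => (e i).1 = x).filter fun i => γ i = z)
      = Finset.univ.image fun t : Fin (fairletCount γ z) => e.symm (x, ⟨z, t⟩) := by
    ext i
    simp only [Finset.mem_filter, Finset.mem_univ, true_and, Finset.mem_image]
    constructor
    · rintro ⟨hx, hz⟩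
      obtain ⟨⟨y, z', t⟩, rfl⟩ := e.symm.surjective i
      rw [← he] at hz
      simp only [Equiv.apply_symm_apply] at hx hz
      subst hx hz
      exact ⟨t, rfl⟩
    · rintro ⟨t, rfl⟩
      simp [← he]
  rw [h, Finset.card_image_of_injective _ fun s t hst => by simpa using hst, Finset.card_univ,
    Fintype.card_fin, card_fairlet, card_fairletSlot hm, ← gcd_mul_fairletCount γ z]
  calc m * fairletCount γ z
      = Finset.univ.gcd (colorCount γ) * fairletSize γ * fairletCount γ z := by
        rw [gcd_mul_fairletSize]
    _ = _ := by ring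

theorem fairMatrix.fairSet_fiber {γ : Fin m → Fin c} {α : Type*} [DecidableEq α]
    {N : Fin m → Fin n → α} (hN : fairMatrix γ N) (τ : Fin n → α) :
    fairSet γ (Finset.univ.filter fun i => N i = τ) := by
  by_cases hτ : τ ∈ types N
  · exact hN τ hτ
  · have : (Finset.univ.filter fun i => N i = τ) = ∅ :=
      Finset.filter_eq_empty_iff.2 fun i _ hi => hτ (hi ▸ Finset.mem_image_of_mem _ (by simp))
    rw [this]
    intro z
    simp

open Classical in
/-- The rows of a fair matrix `N` can be permuted within colors, at bounded extra cost, so that the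
rows lying in fair clusters of `M` contribute a fair set to each cluster. -/
theorem exists_fair_rearrangement (hm : 0 < m) (γ : Fin m → Fin c) (M N : Fin m → Fin n → A)
    (hN : fairMatrix γ N) :
    ∃ H : Equiv.Perm (Fin m), (∀ i, γ (H i) = γ i) ∧
      (∀ (p : (Fin n → A) → Prop) [DecidablePred p], fairSet γ
        (Finset.univ.filter fun i => fairSet γ (cluster M (M i)) ∧ p (N (H i)))) ∧
      fairletSize γ * ∑ i, hammingDist (M i) (N (H i)) + 2 * ∑ i, hammingDist (M i) (N i) ≤
        3 * fairletSize γ * ∑ i, hammingDist (M i) (N i) := by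
  let f : Fin m → Option (Fin n → A) := fun i =>
    if fairSet γ (cluster M (M i)) then some (M i) else none
  have hf : ∀ b, fairSet γ (Finset.univ.filter fun i => f i = b) := by
    have hfair : fairSet γ (Finset.univ.filter fun i => fairSet γ (cluster M (M i))) :=
      fairSet_filter_of_fibers γ M (fun τ => fairSet γ (cluster M τ)) fun τ h => h
    rintro (_ | τ)
    · have h : (Finset.univ.filter fun i => f i = none)
          = Finset.univ.filter fun i => ¬ fairSet γ (cluster M (M i)) := by
        refine Finset.filter_congr fun i _ => ?_
        simp [f]
      have huniv : fairSet γ Finset.univ := fun z => by simp [colorCount, mul_comm]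
      rw [h]
      rw [fairSet_iff_sum_colorExcess] at hfair huniv ⊢
      intro z
      have := Finset.sum_filter_add_sum_filter_not Finset.univ
        (fun i => fairSet γ (cluster M (M i))) (colorExcess γ z)
      rwa [huniv, hfair, zero_add] at this
    · have h : (Finset.univ.filter fun i => f i = some τ)
          = Finset.univ.filter fun i => M i = τ ∧ fairSet γ (cluster M (M i)) := by
        refine Finset.filter_congr fun i _ => ?_
        simp [f, and_comm]
      rw [h]
      exact fairSet_filter_of_fibers γ M (fun ρ => ρ = τ ∧ fairSet γ (cluster M ρ)) fun ρ h => h.2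
  obtain ⟨eQ, labQ, hcQ, hlQ⟩ := exists_fairlet_partition hm γ f hf
  obtain ⟨eP, labP, hcP, hlP⟩ := exists_fairlet_partition hm γ N hN.fairSet_fiber
  obtain ⟨π, hπ, hπw⟩ := exists_perm_sum_le_of_fiber_card (fun j => (eQ j).1) (fun j => (eP j).1)
    (fairletSize_pos hm γ)
    (fun x => (card_fairlet eQ x).trans (card_fairletSlot hm γ))
    (fun x => (card_fairlet eP x).trans (card_fairletSlot hm γ))
    (fun x y => (labQ x).elim 0 fun τ => hammingDist τ (labP y))
  set w := fun x y => (labQ x).elim 0 fun τ => hammingDist τ (labP y) with hw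
  choose j hjQ hjP using hπ
  let G : Equiv.Perm (Fin m) :=
    (eQ.trans (Equiv.prodShear π fun x => Equiv.swap (eQ (j x)).2 (eP (j x)).2)).trans eP.symm
  have hG : ∀ i, eP (G i) =
      (π (eQ i).1, Equiv.swap (eQ (j (eQ i).1)).2 (eP (j (eQ i).1)).2 (eQ i).2) := by
    intro i
    simp [G, Equiv.prodShear]
  have hGj : ∀ x, G (j x) = j x := by
    intro x
    apply eP.injective
    rw [hG, hjQ, Equiv.swap_apply_left, ← hjP]
  have hGcol : ∀ i, γ (G i) = γ i := by
    intro i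
    rw [← hcP, hG, ← hcQ i]
    dsimp only
    rw [Equiv.swap_apply_def]
    split_ifs with h1 h2
    · rw [h1, hcP, hcQ]
    · rw [h2, hcP, hcQ]
    · rfl
  have hNG : ∀ i, N (G i) = labP (π (eQ i).1) := fun i => by rw [← hlP, hG]
  obtain ⟨H, hHcol, hHG, -, hcost⟩ := exists_perm_extending γ M N G hGcol
    (Finset.univ.filter fun i => fairSet γ (cluster M (M i)))
  have hNH : ∀ i, fairSet γ (cluster M (M i)) → N (H i) = labP (π (eQ i).1) := fun i hi => by
    rw [hHG i (by simpa using hi), hNG]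
  have hlab : ∀ i, labQ (eQ i).1 ≠ none ↔ fairSet γ (cluster M (M i)) := fun i => by
    rw [hlQ]; simp [f]
  refine ⟨H, hHcol, fun p _ => ?_, ?_⟩
  · have h : (Finset.univ.filter fun i => fairSet γ (cluster M (M i)) ∧ p (N (H i)))
        = Finset.univ.filter fun i => labQ (eQ i).1 ≠ none ∧ p (labP (π (eQ i).1)) := by
      refine Finset.filter_congr fun i _ => ?_
      rw [hlab]
      exact and_congr_right fun hi => by rw [hNH i hi]
    rw [h]
    exact fairSet_filter_of_fibers γ (fun i => (eQ i).1)
      (fun x => labQ x ≠ none ∧ p (labP (π x))) fun x _ => fairSet_fairlet hm eQ hcQ x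
  · have hX : ∑ i, w (eQ i).1 (eP i).1 ≤ ∑ i, hammingDist (M i) (N i) := by
      refine Finset.sum_le_sum fun i _ => ?_
      simp only [hw, hlQ, hlP, f]
      split_ifs <;> simp
    have hmove : ∑ i with fairSet γ (cluster M (M i)),
        (if G i = i then 0 else hammingDist (M i) (N (G i)))
        ≤ (fairletSize γ - 1) * ∑ x, w x (π x) := by
      calc _ ≤ ∑ i, if G i = i then 0 else w (eQ i).1 (π (eQ i).1) := by
            rw [Finset.sum_filter]
            refine Finset.sum_le_sum fun i _ => ?_
            simp only [hw, hlQ, hNG, f]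
            split_ifs <;> simp
        _ = ∑ x, ∑ i with (eQ i).1 = x, if G i = i then 0 else w (eQ i).1 (π (eQ i).1) :=
            (Finset.sum_fiberwise _ _ _).symm
        _ ≤ ∑ x, (fairletSize γ - 1) * w x (π x) := by
            refine Finset.sum_le_sum fun x _ => ?_
            have hjx : j x ∈ Finset.univ.filter fun i => (eQ i).1 = x := by simp [hjQ]
            rw [← Finset.add_sum_erase _ _ hjx, if_pos (hGj x), zero_add,
              ← card_fairletSlot hm γ, ← card_fairlet eQ x, ← Finset.card_erase_of_mem hjx,
              ← smul_eq_mul]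
            refine Finset.sum_le_card_nsmul _ _ _ fun i hi => ?_
            have hix : (eQ i).1 = x := by simpa using Finset.mem_of_mem_erase hi
            rw [hix]
            split_ifs <;> simp
        _ = _ := by rw [Finset.mul_sum]
    have hpos := fairletSize_pos hm γ
    generalize fairletSize γ = C at *
    obtain ⟨K, rfl⟩ : ∃ K, C = K + 1 := ⟨C - 1, by omega⟩
    rw [Nat.add_sub_cancel] at hmove
    generalize ∑ i, hammingDist (M i) (N i) = Φ at *
    generalize ∑ x, w x (π x) = D at *
    have h1 := Nat.mul_le_mul_left (K + 1) (hcost.trans (Nat.add_le_add_left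
      (Nat.mul_le_mul_left 2 hmove) Φ))
    have h2 := Nat.mul_le_mul_left K (hπw.trans hX)
    nlinarith

/-- Existence of a well-structured near-optimal fair solution. -/
theorem nice_solution_approx (hm : 0 < m) (hn : 0 < n) (γ : Fin m → Fin c)
    (hγ : Function.Surjective γ) (M : Fin m → Fin n → A) (k r : ℕ)
    (h : ∃ Mstar : Fin m → Fin n → A, fairMatrix γ Mstar ∧ editCost M Mstar ≤ k ∧ dr Mstar ≤ r) :
    ∃ M' : Fin m → Fin n → A, fairMatrix γ M' ∧
      dr M' ≤ r ∧
      types M' ⊆ types M ∧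
      (∀ τ : Fin n → A, fairSet γ (cluster M τ) →
        ((∀ i, ¬(M i = τ ∧ M' i ≠ τ)) ∨
          ((∀ i, M' i = τ → M i = τ) ∧
            ∀ i i', M i = τ → M' i ≠ τ → M i' = τ → M' i' ≠ τ → M' i = M' i'))) ∧
      fairletSize γ * editCost M M' ≤ (5 * fairletSize γ - 3) * k := by
  classical
  obtain ⟨N, hN, hNk, hNr⟩ := h
  obtain ⟨H, hHcol, hHfair, hHcost⟩ := exists_fair_rearrangement hm γ M N hN
  have hmem : ∀ (M : Fin m → Fin n → A) i, M i ∈ types M := fun M i =>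
    Finset.mem_image_of_mem _ (Finset.mem_univ i)
  choose ν hνmem hνmin using fun σ : Fin n → A =>
    Finset.exists_min_image (types M) (hammingDist σ) ⟨_, hmem M ⟨0, hm⟩⟩
  let T := (types N).image ν
  have hT : ∀ i, ν (N i) ∈ T := fun i => Finset.mem_image_of_mem _ (hmem N i)
  choose μ hμmem hμmin using fun τ : Fin n → A =>
    Finset.exists_min_image T (hammingDist τ) ⟨_, hT ⟨0, hm⟩⟩
  have hμself : ∀ τ ∈ T, μ τ = τ := fun τ hτ => by
    have := hμmin τ τ hτ
    rw [hammingDist_self, Nat.le_zero, hammingDist_eq_zero] at this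
    exact this.symm
  let M' : Fin m → Fin n → A := fun i =>
    if fairSet γ (cluster M (M i)) then μ (M i) else ν (N (H i))
  have hM'T : ∀ i, M' i ∈ T := fun i => by
    by_cases hi : fairSet γ (cluster M (M i))
    · simpa [M', hi] using hμmem (M i)
    · simpa [M', hi] using hT (H i)
  have htypes : types M' ⊆ T := Finset.image_subset_iff.2 fun i _ => hM'T i
  refine ⟨M', fun σ _ => ?_, ?_, ?_, fun τ hτ => ?_, ?_⟩
  · have hwhole : fairSet γ
        (Finset.univ.filter fun i => fairSet γ (cluster M (M i)) ∧ μ (M i) = σ) :=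
      fairSet_filter_of_fibers γ M (fun τ => fairSet γ (cluster M τ) ∧ μ τ = σ) fun τ h => h.1
    have hpart := hHfair fun τ => ν τ = σ
    have htotal : fairSet γ (Finset.univ.filter fun i => ν (N i) = σ) :=
      fairSet_filter_of_fibers γ N (fun τ => ν τ = σ) fun τ _ => hN.fairSet_fiber τ
    rw [fairSet_iff_sum_colorExcess] at hwhole hpart htotal ⊢
    intro z
    have hperm : ∑ i with ν (N (H i)) = σ, colorExcess γ z i = 0 := by
      rw [← htotal z, Finset.sum_filter, Finset.sum_filter]
      refine Fintype.sum_equiv H _ _ fun i => ?_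
      simp only [colorExcess, hHcol]
    have hsplit := Finset.sum_filter_add_sum_filter_not
      (Finset.univ.filter fun i => ν (N (H i)) = σ)
      (fun i => fairSet γ (cluster M (M i))) (colorExcess γ z)
    have hsplit' := Finset.sum_filter_add_sum_filter_not (cluster M' σ)
      (fun i => fairSet γ (cluster M (M i))) (colorExcess γ z)
    have e1 : (Finset.univ.filter fun i => ν (N (H i)) = σ).filter
        (fun i => fairSet γ (cluster M (M i)))
        = Finset.univ.filter fun i => fairSet γ (cluster M (M i)) ∧ ν (N (H i)) = σ := by
      rw [Finset.filter_filter]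
      exact Finset.filter_congr fun i _ => and_comm
    have e2 : (cluster M' σ).filter (fun i => fairSet γ (cluster M (M i)))
        = Finset.univ.filter fun i => fairSet γ (cluster M (M i)) ∧ μ (M i) = σ := by
      rw [cluster, Finset.filter_filter]
      refine Finset.filter_congr fun i _ => ?_
      by_cases hi : fairSet γ (cluster M (M i)) <;> simp [M', hi]
    have e3 : (cluster M' σ).filter (fun i => ¬ fairSet γ (cluster M (M i)))
        = (Finset.univ.filter fun i => ν (N (H i)) = σ).filter
          (fun i => ¬ fairSet γ (cluster M (M i))) := by
      rw [cluster, Finset.filter_filter, Finset.filter_filter]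
      refine Finset.filter_congr fun i _ => ?_
      by_cases hi : fairSet γ (cluster M (M i)) <;> simp [M', hi]
    rw [e1, hpart, hperm, zero_add] at hsplit
    rw [e2, hwhole, e3, hsplit, zero_add] at hsplit'
    exact hsplit'.symm
  · exact (Finset.card_le_card htypes).trans (Finset.card_image_le.trans hNr)
  · exact htypes.trans (Finset.image_subset_iff.2 fun σ _ => hνmem σ)
  · have hμτ : ∀ i, M i = τ → M' i = μ τ := by
      rintro i rfl
      simp [M', hτ]
    by_cases hτT : τ ∈ T
    · exact Or.inl fun i hi => hi.2 ((hμτ i hi.1).trans (hμself τ hτT))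
    · exact Or.inr ⟨fun i hi => absurd (hi ▸ hM'T i) hτT,
        fun i i' hi _ hi' _ => (hμτ i hi).trans (hμτ i' hi').symm⟩
  · rw [editCost_eq_sum_hammingDist] at hNk ⊢
    have hle : ∑ i, hammingDist (M i) (M' i)
        ≤ ∑ i, hammingDist (M i) (N (H i)) + ∑ i, hammingDist (M i) (N i) := by
      calc ∑ i, hammingDist (M i) (M' i)
          ≤ ∑ i, (hammingDist (M i) (N (H i)) + hammingDist (N (H i)) (ν (N (H i)))) := by
            refine Finset.sum_le_sum fun i _ => le_trans ?_ (hammingDist_triangle _ _ _)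
            by_cases hi : fairSet γ (cluster M (M i))
            · simpa [M', hi] using hμmin (M i) _ (hT (H i))
            · simp [M', hi]
        _ = ∑ i, hammingDist (M i) (N (H i)) + ∑ i, hammingDist (N i) (ν (N i)) := by
            rw [Finset.sum_add_distrib, Equiv.sum_comp H fun i => hammingDist (N i) (ν (N i))]
        _ ≤ _ := by
            refine Nat.add_le_add_left (Finset.sum_le_sum fun i _ => ?_) _
            rw [hammingDist_comm (M i)]
            exact hνmin (N i) _ (hmem M i)
    obtain ⟨K, hK⟩ : ∃ K, fairletSize γ = K + 1 :=
      ⟨fairletSize γ - 1, by have := fairletSize_pos hm γ; omega⟩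
    rw [hK] at hHcost ⊢
    rw [show 5 * (K + 1) - 3 = 5 * K + 2 by omega]
    have h1 := Nat.mul_le_mul_left (K + 1) hle
    have h2 := Nat.mul_le_mul_left (5 * K + 2) hNk
    nlinarith
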